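/- arXiv:1608.08913 — 2 statements merged into one kernel-verified Lean document; each statement's English description precedes it below -/
import Mathlib

section
/- (Uniform comparison with the fractional Laplacian, Hölder case.) Let 0<α≤1 and 0<s<1 with 2s<α. Let U:ℝ→ℝ be bounded with [U]_{C^{0,α}} := sup_{x≠y}|U(x)−U(y)|/|x−y|^α < ∞. Then there is a constant C>0 depending only on s and α (independent of h and U) such that for every h>0, sup_{j∈ℤ} |(-Δ_h)^s(r_hU)_j − (-Δ)^sU(hj)| ≤ C·[U]_{C^{0,α}}·h^{α−2s}. -/
open MeasureTheory

/-- The normalizing constant `A_s = 4^s Γ(1/2+s)/(√π |Γ(-s)|)`, with `|Γ(-s)| = Γ(1-s)/s`. -/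
noncomputable def As (s : ℝ) : ℝ :=
  (4 : ℝ) ^ s * Real.Gamma (1/2 + s) / (Real.sqrt Real.pi * (Real.Gamma (1 - s) / s))

/-- The kernel of the fractional discrete Laplacian on the mesh of size `h`. -/
noncomputable def Ksh (h s : ℝ) (m : ℤ) : ℝ :=
  if m = 0 then 0 else
    As s * (Real.Gamma (|(m : ℝ)| - s) / (h ^ (2 * s) * Real.Gamma (|(m : ℝ)| + 1 + s)))

/-- The fractional discrete Laplacian `(-Δ_h)^s u_j = Σ_{m ≠ j} (u_j - u_m) K_s^h(j-m)`. -/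
noncomputable def fracLap (h s : ℝ) (u : ℤ → ℝ) (j : ℤ) : ℝ :=
  ∑' m : ℤ, (u j - u m) * Ksh h s (j - m)

/-- The continuous fractional Laplacian `(-Δ)^s U(x) = A_s ∫_ℝ (U(x)-U(y))/|x-y|^{1+2s} dy`. -/
noncomputable def cFracLap (s : ℝ) (U : ℝ → ℝ) (x : ℝ) : ℝ :=
  As s * ∫ y : ℝ, (U x - U y) / |x - y| ^ (1 + 2 * s)

lemma wendel_upper {x a : ℝ} (hx : 0 < x) (ha0 : 0 < a) (ha1 : a < 1) :
    Real.Gamma (x + a) ≤ x ^ a * Real.Gamma x := by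
  have h := Real.Gamma_mul_add_mul_le_rpow_Gamma_mul_rpow_Gamma (s := x) (t := x + 1)
    (a := 1 - a) (b := a) hx (by linarith) (by linarith) ha0 (by ring)
  have hG := Real.Gamma_pos_of_pos hx
  rw [Real.Gamma_add_one hx.ne', Real.mul_rpow hx.le hG.le] at h
  have e : (1 - a) * x + a * (x + 1) = x + a := by ring
  rw [e] at h
  have e2 : Real.Gamma x ^ (1 - a) * Real.Gamma x ^ a = Real.Gamma x := by
    rw [← Real.rpow_add hG]; simp
  calc _ ≤ _ := h
    _ = x ^ a * (Real.Gamma x ^ (1 - a) * Real.Gamma x ^ a) := by ring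
    _ = _ := by rw [e2]

lemma kernel_est {s x : ℝ} (hs0 : 0 < s) (hs : s < 1 / 2) (hx : 1 ≤ x) :
    |Real.Gamma (x - s) / Real.Gamma (x + 1 + s) - x ^ (-(1 + 2 * s))| ≤
      x ^ (-(1 + 2 * s)) / x := by
  have hx0 : 0 < x := by linarith
  have hX := Real.Gamma_pos_of_pos (show 0 < x - s by linarith)
  have hY := Real.Gamma_pos_of_pos (show 0 < x + 1 + s by linarith)
  have hZ := Real.Gamma_pos_of_pos (show 0 < x + s by linarith)
  have hP : 0 < x ^ (2 * s) := Real.rpow_pos_of_pos hx0 _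
  have u := wendel_upper (x := x - s) (a := 2 * s) (by linarith) (by linarith) (by linarith)
  have l := wendel_upper (x := x + s) (a := 1 - 2 * s) (by linarith) (by linarith) (by linarith)
  rw [show x - s + 2 * s = x + s by ring] at u
  rw [show x + s + (1 - 2 * s) = (x - s) + 1 by ring,
    Real.Gamma_add_one (by linarith)] at l
  have hYZ : Real.Gamma (x + 1 + s) = (x + s) * Real.Gamma (x + s) := by
    rw [show x + 1 + s = (x + s) + 1 by ring, Real.Gamma_add_one (by linarith)]
  have p1 : (x - s) ^ (2 * s) ≤ x ^ (2 * s) :=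
    Real.rpow_le_rpow (by linarith) (by linarith) (by linarith)
  have p2 : x ^ (2 * s) ≤ (x + s) ^ (2 * s) :=
    Real.rpow_le_rpow (by linarith) (by linarith) (by linarith)
  have up : Real.Gamma (x + 1 + s) ≤ (x + s) * (x ^ (2 * s) * Real.Gamma (x - s)) := by
    rw [hYZ]
    gcongr
    exact u.trans (by gcongr)
  have e : (x + s) ^ (2 * s) * (x + s) ^ (1 - 2 * s) = x + s := by
    rw [← Real.rpow_add (by linarith)]; simp
  have lo : (x - s) * (x ^ (2 * s) * Real.Gamma (x - s)) ≤ Real.Gamma (x + 1 + s) := by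
    calc (x - s) * (x ^ (2 * s) * Real.Gamma (x - s))
        = x ^ (2 * s) * ((x - s) * Real.Gamma (x - s)) := by ring
      _ ≤ (x + s) ^ (2 * s) * ((x + s) ^ (1 - 2 * s) * Real.Gamma (x + s)) := by
          apply mul_le_mul p2 l
          · exact mul_nonneg (by linarith) hX.le
          · positivity
      _ = ((x + s) ^ (2 * s) * (x + s) ^ (1 - 2 * s)) * Real.Gamma (x + s) := by ring
      _ = _ := by rw [e, hYZ]
  rw [Real.rpow_neg hx0.le, Real.rpow_add hx0, Real.rpow_one]
  generalize x ^ (2 * s) = P at *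
  generalize Real.Gamma (x - s) = X at *
  generalize Real.Gamma (x + 1 + s) = Y at *
  have hPX : 0 < P * X := by positivity
  have key : |x * (P * X) - Y| * x ≤ Y := by
    have h1 : |x * (P * X) - Y| ≤ s * (P * X) := by
      rw [abs_le]; constructor <;> nlinarith
    calc _ ≤ s * (P * X) * x := by gcongr
      _ ≤ (x - s) * (P * X) := by
        have : s * x ≤ x - s := by nlinarith
        nlinarith
      _ ≤ Y := lo
  have e3 : X / Y - (x * P)⁻¹ = (x * (P * X) - Y) / (Y * (x * P)) := by
    field_simp
  rw [e3, abs_div, abs_of_pos (show 0 < Y * (x * P) by positivity), div_le_iff₀ (by positivity)]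
  have e4 : (x * P)⁻¹ / x * (Y * (x * P)) = Y / x := by field_simp
  rw [e4, le_div_iff₀ hx0]
  exact key

lemma pow_est {s x t : ℝ} (hs0 : 0 < s) (hs : s < 1 / 2) (hx : 1 ≤ x) (h1 : x ≤ t)
    (h2 : t ≤ x + 1) :
    |x ^ (-(1 + 2 * s)) - t ^ (-(1 + 2 * s))| ≤ 2 * (x ^ (-(1 + 2 * s)) / x) := by
  have hx0 : 0 < x := by linarith
  have ht0 : 0 < t := by linarith
  have hm : t ^ (-(1 + 2 * s)) ≤ x ^ (-(1 + 2 * s)) :=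
    Real.rpow_le_rpow_of_nonpos hx0 h1 (by linarith)
  have hq : 0 < x ^ (-(1 + 2 * s)) := Real.rpow_pos_of_pos hx0 _
  have e : t ^ (-(1 + 2 * s)) = x ^ (-(1 + 2 * s)) * (x / t) ^ (1 + 2 * s) := by
    rw [Real.div_rpow hx0.le ht0.le, Real.rpow_neg hx0.le, Real.rpow_neg ht0.le]
    have := Real.rpow_pos_of_pos hx0 (1 + 2 * s)
    field_simp
  have h3 : (x / t) ^ (2 : ℝ) ≤ (x / t) ^ (1 + 2 * s) :=
    Real.rpow_le_rpow_of_exponent_ge (by positivity) ((div_le_one ht0).2 h1) (by linarith)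
  have h4 : 1 - 1 / x ≤ x / t := by
    rw [le_div_iff₀ ht0]
    have : (1 - 1 / x) * t ≤ (1 - 1 / x) * (x + 1) := by
      apply mul_le_mul_of_nonneg_left h2
      rw [sub_nonneg, div_le_one hx0]; exact hx
    have e2 : (1 - 1 / x) * (x + 1) = x - 1 / x := by field_simp; ring
    have : 0 < 1 / x := by positivity
    linarith
  have h5 : 1 - 2 / x ≤ (x / t) ^ (1 + 2 * s) := by
    rw [Real.rpow_two] at h3
    have : 2 / x = 2 * (1 / x) := by ring
    nlinarith [sq_nonneg (x / t - 1)]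
  rw [abs_of_nonneg (by linarith), e]
  have : 2 * (x ^ (-(1 + 2 * s)) / x) = x ^ (-(1 + 2 * s)) * (2 / x) := by ring
  nlinarith

lemma cell_est {α s x t H : ℝ} (hα0 : 0 < α) (hα1 : α ≤ 1) (hs0 : 0 < s) (hs : s < 1 / 2)
    (hx : 1 ≤ x) (h1 : x ≤ t) (h2 : t ≤ x + 1) (g : ℝ → ℝ) (hH : 0 ≤ H) (g0 : g 0 = 0)
    (hg : ∀ x y : ℝ, |g x - g y| ≤ H * |x - y| ^ α) :
    |g x * (Real.Gamma (x - s) / Real.Gamma (x + 1 + s)) - g t / |t| ^ (1 + 2 * s)| ≤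
      4 * H * x ^ (-(1 + 2 * s)) := by
  have hx0 : 0 < x := by linarith
  have ht0 : 0 < t := by linarith
  have k1 := kernel_est hs0 hs hx
  have k2 := pow_est hs0 hs hx h1 h2
  have hq : 0 < x ^ (-(1 + 2 * s)) := Real.rpow_pos_of_pos hx0 _
  have hm : t ^ (-(1 + 2 * s)) ≤ x ^ (-(1 + 2 * s)) :=
    Real.rpow_le_rpow_of_nonpos hx0 h1 (by linarith)
  have hm0 : 0 < t ^ (-(1 + 2 * s)) := Real.rpow_pos_of_pos ht0 _
  have a1 : |g x| ≤ H * x := by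
    have := hg x 0
    rw [g0, sub_zero, sub_zero, abs_of_pos hx0] at this
    have : x ^ α ≤ x ^ (1 : ℝ) := Real.rpow_le_rpow_of_exponent_le hx hα1
    rw [Real.rpow_one] at this
    nlinarith
  have a2 : |g x - g t| ≤ H := by
    have h := hg x t
    have : |x - t| ^ α ≤ 1 := Real.rpow_le_one (abs_nonneg _)
      (by rw [abs_le]; constructor <;> linarith) hα0.le
    nlinarith
  rw [abs_of_pos ht0, div_eq_mul_inv (g t), ← Real.rpow_neg ht0.le]
  generalize Real.Gamma (x - s) / Real.Gamma (x + 1 + s) = K at *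
  generalize x ^ (-(1 + 2 * s)) = q at *
  generalize t ^ (-(1 + 2 * s)) = r at *
  have e : g x * K - g t * r = g x * (K - q) + g x * (q - r) + (g x - g t) * r := by ring
  rw [e]
  calc _ ≤ |g x * (K - q)| + |g x * (q - r)| + |(g x - g t) * r| := abs_add_three _ _ _
    _ = |g x| * |K - q| + |g x| * |q - r| + |g x - g t| * r := by
      rw [abs_mul, abs_mul, abs_mul, abs_of_pos hm0]
    _ ≤ (H * x) * (q / x) + (H * x) * (2 * (q / x)) + H * q := by gcongr
    _ = 4 * H * q := by field_simp; ring

lemma half_est {α s H M : ℝ} (hα0 : 0 < α) (hα1 : α ≤ 1) (hs0 : 0 < s) (h2s : 2 * s < α)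
    (g : ℝ → ℝ) (hH : 0 ≤ H) (g0 : g 0 = 0) (hM : ∀ x, |g x| ≤ M)
    (hg : ∀ x y : ℝ, |g x - g y| ≤ H * |x - y| ^ α) :
    IntegrableOn (fun t => g t / |t| ^ (1 + 2 * s)) (Set.Ioi 0) ∧
    Summable (fun n : ℕ => g (n + 1) *
      (Real.Gamma ((n + 1 : ℝ) - s) / Real.Gamma ((n + 1 : ℝ) + 1 + s))) ∧
    |(∑' n : ℕ, g (n + 1) *
      (Real.Gamma ((n + 1 : ℝ) - s) / Real.Gamma ((n + 1 : ℝ) + 1 + s))) -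
      ∫ t in Set.Ioi 0, g t / |t| ^ (1 + 2 * s)| ≤
      H * (1 / (α - 2 * s) + 4 * ∑' n : ℕ, (n + 1 : ℝ) ^ (-(1 + 2 * s))) := by
  have hs : s < 1 / 2 := by linarith
  have gc : Continuous g := by
    rw [continuous_iff_continuousAt]
    intro x
    rw [ContinuousAt, tendsto_iff_dist_tendsto_zero]
    have hb : Filter.Tendsto (fun y => H * |y - x| ^ α) (nhds x) (nhds 0) := by
      have : ContinuousAt (fun y => H * |y - x| ^ α) x := by
        refine continuousAt_const.mul (ContinuousAt.rpow_const ?_ (Or.inr hα0.le))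
        fun_prop
      have h := this.tendsto
      simpa [Real.zero_rpow hα0.ne'] using h
    exact squeeze_zero (fun _ => dist_nonneg) (fun y => by rw [Real.dist_eq]; exact hg y x) hb
  have Fm : Measurable (fun t => g t / |t| ^ (1 + 2 * s)) := by
    have := gc.measurable
    fun_prop
  have zs : Summable (fun n : ℕ => (n + 1 : ℝ) ^ (-(1 + 2 * s))) := by
    have := (summable_nat_add_iff 1).2
      (Real.summable_nat_rpow.2 (show -(1 + 2 * s) < -1 by linarith))
    simpa using this
  have M0 : 0 ≤ M := (abs_nonneg _).trans (hM 0)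
  -- integrability near zero
  have b1 : ∀ t ∈ Set.Ioc (0 : ℝ) 1, ‖g t / |t| ^ (1 + 2 * s)‖ ≤ H * t ^ (α - (1 + 2 * s)) := by
    intro t ht
    have h := hg t 0
    rw [g0, sub_zero, sub_zero, abs_of_pos ht.1] at h
    rw [Real.norm_eq_abs, abs_div, abs_of_pos ht.1, Real.rpow_sub ht.1,
      abs_of_pos (Real.rpow_pos_of_pos ht.1 _), ← mul_div_assoc]
    have := Real.rpow_pos_of_pos ht.1 (1 + 2 * s)
    gcongr
  have I1 : IntervalIntegrable (fun t : ℝ => H * t ^ (α - (1 + 2 * s))) volume 0 1 :=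
    (intervalIntegral.intervalIntegrable_rpow' (by linarith)).const_mul H
  have F1 : IntegrableOn (fun t => g t / |t| ^ (1 + 2 * s)) (Set.Ioc 0 1) := by
    rw [intervalIntegrable_iff_integrableOn_Ioc_of_le zero_le_one] at I1
    refine Integrable.mono' I1 Fm.aestronglyMeasurable ?_
    exact (ae_restrict_iff' measurableSet_Ioc).2 (Filter.Eventually.of_forall b1)
  have F2 : IntegrableOn (fun t => g t / |t| ^ (1 + 2 * s)) (Set.Ioi 1) := by
    have I2 : IntegrableOn (fun t : ℝ => M * t ^ (-(1 + 2 * s))) (Set.Ioi 1) :=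
      (integrableOn_Ioi_rpow_of_lt (by linarith) one_pos).const_mul M
    refine Integrable.mono' I2 Fm.aestronglyMeasurable ?_
    refine (ae_restrict_iff' measurableSet_Ioi).2 (Filter.Eventually.of_forall ?_)
    intro t ht
    have t0 : 0 < t := lt_trans one_pos ht
    rw [Real.norm_eq_abs, abs_div, abs_of_pos t0, abs_of_pos (Real.rpow_pos_of_pos t0 _),
      Real.rpow_neg t0.le, ← div_eq_mul_inv]
    have := Real.rpow_pos_of_pos t0 (1 + 2 * s)
    gcongr
    exact hM t
  have F0 : IntegrableOn (fun t => g t / |t| ^ (1 + 2 * s)) (Set.Ioi 0) := by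
    rw [← Set.Ioc_union_Ioi_eq_Ioi (zero_le_one' ℝ)]
    exact F1.union F2
  have S : Summable (fun n : ℕ => g (n + 1) *
      (Real.Gamma ((n + 1 : ℝ) - s) / Real.Gamma ((n + 1 : ℝ) + 1 + s))) := by
    refine Summable.of_norm_bounded (zs.mul_left (M * 2)) ?_
    intro n
    have hx : (1 : ℝ) ≤ n + 1 := by simp
    have k := kernel_est hs0 hs hx
    have hq : 0 < ((n : ℝ) + 1) ^ (-(1 + 2 * s)) := Real.rpow_pos_of_pos (by linarith) _
    have hd := div_le_self hq.le hx
    rw [Real.norm_eq_abs, abs_mul, mul_assoc]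
    refine mul_le_mul (hM _) ?_ (abs_nonneg _) M0
    rw [abs_le] at k ⊢
    constructor <;> linarith [k.1, k.2]
  refine ⟨F0, S, ?_⟩
  have int_split : ∫ t in Set.Ioi 0, g t / |t| ^ (1 + 2 * s) =
      (∫ t in (0:ℝ)..1, g t / |t| ^ (1 + 2 * s)) +
      ∫ t in Set.Ioi 1, g t / |t| ^ (1 + 2 * s) := by
    rw [← Set.Ioc_union_Ioi_eq_Ioi (zero_le_one' ℝ),
      setIntegral_union (Set.Ioc_disjoint_Ioi le_rfl) measurableSet_Ioi F1 F2,
      intervalIntegral.integral_of_le zero_le_one]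
  have B1 : |∫ t in (0:ℝ)..1, g t / |t| ^ (1 + 2 * s)| ≤ H * (1 / (α - 2 * s)) := by
    have h := intervalIntegral.norm_integral_le_of_norm_le (μ := volume) zero_le_one
      (Filter.Eventually.of_forall b1) I1
    rw [intervalIntegral.integral_const_mul, integral_rpow (Or.inl (by linarith))] at h
    rw [show α - (1 + 2 * s) + 1 = α - 2 * s by ring, Real.one_rpow,
      Real.zero_rpow (by linarith), sub_zero] at h
    exact h
  have B2 : |(∑' n : ℕ, g (n + 1) *
      (Real.Gamma ((n + 1 : ℝ) - s) / Real.Gamma ((n + 1 : ℝ) + 1 + s))) -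
      ∫ t in Set.Ioi 1, g t / |t| ^ (1 + 2 * s)| ≤
      H * (4 * ∑' n : ℕ, (n + 1 : ℝ) ^ (-(1 + 2 * s))) := by
    have tb : Filter.Tendsto (fun N : ℕ => (N : ℝ) + 1) Filter.atTop Filter.atTop :=
      Filter.tendsto_atTop_add_const_right _ _ tendsto_natCast_atTop_atTop
    have T1 := intervalIntegral_tendsto_integral_Ioi 1 F2 tb
    have T2 := S.hasSum.tendsto_sum_nat
    refine le_of_tendsto (T2.sub T1).abs (Filter.Eventually.of_forall fun N => ?_)
    have II : ∀ k : ℕ, IntervalIntegrable (fun t => g t / |t| ^ (1 + 2 * s)) volume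
        ((k : ℝ) + 1) (((k + 1 : ℕ) : ℝ) + 1) := by
      intro k
      rw [intervalIntegrable_iff_integrableOn_Ioc_of_le (by push_cast; linarith)]
      refine F0.mono_set fun t ht => ?_
      have : (0 : ℝ) ≤ k := by positivity
      exact lt_of_le_of_lt (by linarith) ht.1
    have sm := intervalIntegral.sum_integral_adjacent_intervals
      (a := fun k : ℕ => (k : ℝ) + 1) (n := N) (fun k _ => II k)
    simp only [Nat.cast_zero, zero_add] at sm
    rw [← sm, ← Finset.sum_sub_distrib]
    calc _ ≤ ∑ k ∈ Finset.range N, |g (k + 1) *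
          (Real.Gamma ((k + 1 : ℝ) - s) / Real.Gamma ((k + 1 : ℝ) + 1 + s)) -
          ∫ t in ((k : ℝ) + 1)..(((k + 1 : ℕ) : ℝ) + 1), g t / |t| ^ (1 + 2 * s)| :=
          Finset.abs_sum_le_sum_abs _ _
      _ ≤ ∑ k ∈ Finset.range N, 4 * H * (k + 1 : ℝ) ^ (-(1 + 2 * s)) := by
        refine Finset.sum_le_sum fun k _ => ?_
        have hk : (1 : ℝ) ≤ k + 1 := by simp
        have e : g (k + 1) *
          (Real.Gamma ((k + 1 : ℝ) - s) / Real.Gamma ((k + 1 : ℝ) + 1 + s)) -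
          ∫ t in ((k : ℝ) + 1)..(((k + 1 : ℕ) : ℝ) + 1), g t / |t| ^ (1 + 2 * s) =
          ∫ t in ((k : ℝ) + 1)..(((k + 1 : ℕ) : ℝ) + 1), (g (k + 1) *
          (Real.Gamma ((k + 1 : ℝ) - s) / Real.Gamma ((k + 1 : ℝ) + 1 + s)) -
            g t / |t| ^ (1 + 2 * s)) := by
          rw [intervalIntegral.integral_sub intervalIntegrable_const (II k)]
          simp
        rw [e]
        have h := intervalIntegral.norm_integral_le_of_norm_le_const
          (a := (k : ℝ) + 1) (b := ((k + 1 : ℕ) : ℝ) + 1)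
          (C := 4 * H * (k + 1 : ℝ) ^ (-(1 + 2 * s)))
          (f := fun t => g (k + 1) *
          (Real.Gamma ((k + 1 : ℝ) - s) / Real.Gamma ((k + 1 : ℝ) + 1 + s)) -
            g t / |t| ^ (1 + 2 * s)) (by
            intro t ht
            rw [Set.uIoc_of_le (by push_cast; linarith)] at ht
            have h2 := ht.2
            push_cast at h2
            exact cell_est hα0 hα1 hs0 hs hk ht.1.le h2 g hH g0 hg)
        have : |((k + 1 : ℕ) : ℝ) + 1 - ((k : ℝ) + 1)| = 1 := by
          push_cast; simp
        rw [this, mul_one] at h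
        exact h
      _ = 4 * H * ∑ k ∈ Finset.range N, (k + 1 : ℝ) ^ (-(1 + 2 * s)) := by
        rw [Finset.mul_sum]
      _ ≤ 4 * H * ∑' n : ℕ, (n + 1 : ℝ) ^ (-(1 + 2 * s)) := by
        gcongr
        exact zs.sum_le_tsum _ (fun i _ => by positivity)
      _ = _ := by ring
  rw [int_split]
  rw [abs_le] at *
  constructor <;> linarith [B1.1, B1.2, B2.1, B2.2]

lemma Ksh_eq {h s : ℝ} (hh : 0 < h) (m : ℤ) (n : ℕ) (hm : |(m : ℝ)| = n + 1) :
    Ksh h s m = As s * h ^ (-(2 * s)) *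
      (Real.Gamma ((n + 1 : ℝ) - s) / Real.Gamma ((n + 1 : ℝ) + 1 + s)) := by
  have : m ≠ 0 := by
    rintro rfl
    have : (0 : ℝ) ≤ n := by positivity
    simp at hm
    linarith
  rw [Ksh, if_neg this, hm, Real.rpow_neg hh.le]
  have := Real.rpow_pos_of_pos hh (2 * s)
  field_simp

/-- Uniform comparison of the fractional discrete Laplacian with the fractional Laplacian,
for bounded `α`-Hölder functions with `2s < α`. -/
theorem uniform_comparison_Holder (α s : ℝ) (hα0 : 0 < α) (hα1 : α ≤ 1)
    (hs0 : 0 < s) (hs1 : s < 1) (h2s : 2 * s < α) :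
    ∃ C : ℝ, 0 < C ∧ ∀ h : ℝ, 0 < h → ∀ U : ℝ → ℝ, ∀ M L : ℝ, 0 ≤ L →
      (∀ x : ℝ, |U x| ≤ M) →
      (∀ x y : ℝ, |U x - U y| ≤ L * |x - y| ^ α) →
      ∀ j : ℤ,
        |fracLap h s (fun m : ℤ => U (h * m)) j - cFracLap s U (h * j)| ≤
          C * L * h ^ (α - 2 * s) := by
  have Apos : 0 < As s := by
    have h1 := Real.Gamma_pos_of_pos (show 0 < 1 / 2 + s by linarith)
    have h2 := Real.Gamma_pos_of_pos (show 0 < 1 - s by linarith)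
    have h3 := Real.pi_pos
    unfold As
    positivity
  set C0 : ℝ := 1 / (α - 2 * s) + 4 * ∑' n : ℕ, (n + 1 : ℝ) ^ (-(1 + 2 * s)) with hC0
  have C0pos : 0 < C0 := by
    have h1 : 0 < 1 / (α - 2 * s) := one_div_pos.2 (by linarith)
    have h2 : 0 ≤ ∑' n : ℕ, (n + 1 : ℝ) ^ (-(1 + 2 * s)) :=
      tsum_nonneg fun n => by positivity
    linarith
  refine ⟨2 * As s * C0, by positivity, ?_⟩
  intro h hh U M L hL hM hU j
  set x : ℝ := h * j with hx
  set g : ℝ → ℝ := fun t => U x - U (x + h * t) with hgdef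
  have hα : 0 < h ^ α := Real.rpow_pos_of_pos hh _
  have g0 : g 0 = 0 := by simp [hgdef]
  have gM : ∀ t, |g t| ≤ 2 * M := by
    intro t
    have h1 := abs_le.1 (hM x)
    have h2 := abs_le.1 (hM (x + h * t))
    rw [abs_le]
    constructor <;> simp only [hgdef] <;> linarith [h1.1, h1.2, h2.1, h2.2]
  have gH : ∀ a b, |g a - g b| ≤ (L * h ^ α) * |a - b| ^ α := by
    intro a b
    have h1 := hU (x + h * b) (x + h * a)
    have e1 : x + h * b - (x + h * a) = h * (b - a) := by ring
    have e2 : g a - g b = U (x + h * b) - U (x + h * a) := by simp [hgdef]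
    rw [e1, abs_mul, abs_of_pos hh, Real.mul_rpow hh.le (abs_nonneg _), abs_sub_comm b a] at h1
    rw [e2, mul_assoc]
    exact h1
  have HH : 0 ≤ L * h ^ α := by positivity
  obtain ⟨i1, s1, d1⟩ := half_est hα0 hα1 hs0 h2s g HH g0 gM gH
  obtain ⟨i2, s2, d2⟩ := half_est hα0 hα1 hs0 h2s (fun t => g (-t)) HH (by simpa using g0)
    (fun t => gM (-t)) (fun a b => by
      have := gH (-a) (-b)
      rwa [show -a - -b = -(a - b) by ring, abs_neg] at this)
  rw [← hC0] at d1 d2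
  -- the integral
  have integral_eq : ∫ y : ℝ, (U x - U y) / |x - y| ^ (1 + 2 * s) =
      h ^ (-(2 * s)) * ((∫ t in Set.Ioi 0, g (-t) / |t| ^ (1 + 2 * s)) +
        ∫ t in Set.Ioi 0, g t / |t| ^ (1 + 2 * s)) := by
    have c1 : ∫ y : ℝ, (U x - U y) / |x - y| ^ (1 + 2 * s) =
        ∫ y : ℝ, (U x - U (x + y)) / |y| ^ (1 + 2 * s) := by
      rw [← integral_add_left_eq_self _ x]
      congr 1
      ext y
      rw [show x - (x + y) = -y by ring, abs_neg]
    have c2 := Measure.integral_comp_mul_left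
      (fun y : ℝ => (U x - U (x + y)) / |y| ^ (1 + 2 * s)) h
    have c3 : ∀ t : ℝ, (U x - U (x + h * t)) / |h * t| ^ (1 + 2 * s) =
        h ^ (-(1 + 2 * s)) * (g t / |t| ^ (1 + 2 * s)) := by
      intro t
      rw [abs_mul, abs_of_pos hh, Real.mul_rpow hh.le (abs_nonneg _), Real.rpow_neg hh.le,
        mul_comm (h ^ (1 + 2 * s)), ← div_div, div_eq_inv_mul]
    simp only [c3] at c2
    rw [integral_const_mul, abs_of_pos (inv_pos.2 hh), smul_eq_mul] at c2
    have c4 : ∫ y : ℝ, (U x - U (x + y)) / |y| ^ (1 + 2 * s) =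
        h ^ (-(2 * s)) * ∫ t, g t / |t| ^ (1 + 2 * s) := by
      have : h ^ (-(2 * s)) = h * h ^ (-(1 + 2 * s)) := by
        conv_rhs => rw [← Real.rpow_one_add' hh.le (by linarith)]
        congr 1; ring
      rw [this, mul_assoc, c2]
      field_simp
    have n1 : IntegrableOn (fun t => g t / |t| ^ (1 + 2 * s)) (Set.Iic 0) := by
      have := IntegrableOn.comp_neg_Iic (c := (0 : ℝ))
        (f := fun t => g (-t) / |t| ^ (1 + 2 * s)) (μ := volume) (by
          rw [neg_zero]
          exact (integrableOn_Ici_iff_integrableOn_Ioi (by simp)).2 i2)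
      simpa using this
    have n2 := integral_comp_neg_Iic 0 (fun t => g (-t) / |t| ^ (1 + 2 * s))
    simp only [neg_neg, abs_neg, neg_zero] at n2
    rw [c1, c4, ← intervalIntegral.integral_Iic_add_Ioi n1 i1, n2]
  -- the sum
  have hsum : fracLap h s (fun m : ℤ => U (h * m)) j = As s * h ^ (-(2 * s)) *
      ((∑' n : ℕ, g (n + 1) *
        (Real.Gamma ((n + 1 : ℝ) - s) / Real.Gamma ((n + 1 : ℝ) + 1 + s))) +
      (∑' n : ℕ, g (-(n + 1)) *
        (Real.Gamma ((n + 1 : ℝ) - s) / Real.Gamma ((n + 1 : ℝ) + 1 + s)))) := by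
    have r1 : fracLap h s (fun m : ℤ => U (h * m)) j = ∑' n : ℤ, g n * Ksh h s (-n) := by
      unfold fracLap
      rw [← (Equiv.addLeft j).tsum_eq]
      refine tsum_congr fun n => ?_
      simp only [Equiv.coe_addLeft, hgdef]
      rw [show j - (j + n) = -n by ring]
      push_cast
      rw [mul_add]
    have q1 : HasSum (fun n : ℕ => g (((n : ℤ) + 1 : ℤ) : ℝ) * Ksh h s (-((n : ℤ) + 1)))
        (As s * h ^ (-(2 * s)) * ∑' n : ℕ, g (n + 1) *
        (Real.Gamma ((n + 1 : ℝ) - s) / Real.Gamma ((n + 1 : ℝ) + 1 + s))) := by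
      have hq := s1.hasSum.mul_left (As s * h ^ (-(2 * s)))
      refine (congrArg (fun f => HasSum f _) (funext fun n => ?_)).mpr hq
      rw [Ksh_eq hh _ n (by push_cast; rw [abs_neg, abs_of_pos (by positivity)])]
      push_cast
      ring
    have q2 : HasSum (fun n : ℕ => g ((-((n : ℤ) + 1) : ℤ) : ℝ) * Ksh h s (-(-((n : ℤ) + 1))))
        (As s * h ^ (-(2 * s)) * ∑' n : ℕ, g (-(n + 1)) *
        (Real.Gamma ((n + 1 : ℝ) - s) / Real.Gamma ((n + 1 : ℝ) + 1 + s))) := by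
      have hq := s2.hasSum.mul_left (As s * h ^ (-(2 * s)))
      refine (congrArg (fun f => HasSum f _) (funext fun n => ?_)).mpr hq
      rw [Ksh_eq hh _ n (by push_cast; rw [neg_neg, abs_of_pos (by positivity)])]
      push_cast
      ring
    have q := HasSum.of_add_one_of_neg_add_one (f := fun n : ℤ => g n * Ksh h s (-n)) q1 q2
    rw [r1, q.tsum_eq]
    simp [Ksh]
    ring
  rw [hsum, cFracLap, integral_eq]
  have hp : h ^ (α - 2 * s) = h ^ α * h ^ (-(2 * s)) := by
    rw [← Real.rpow_add hh]; congr 1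
  have hs' : 0 < As s * h ^ (-(2 * s)) := mul_pos Apos (Real.rpow_pos_of_pos hh _)
  rw [hp]
  generalize (∑' n : ℕ, g (n + 1) *
        (Real.Gamma ((n + 1 : ℝ) - s) / Real.Gamma ((n + 1 : ℝ) + 1 + s))) = X1 at *
  generalize (∑' n : ℕ, g (-(n + 1)) *
        (Real.Gamma ((n + 1 : ℝ) - s) / Real.Gamma ((n + 1 : ℝ) + 1 + s))) = X2 at *
  generalize (∫ t in Set.Ioi 0, g (-t) / |t| ^ (1 + 2 * s)) = J2 at *
  generalize (∫ t in Set.Ioi 0, g t / |t| ^ (1 + 2 * s)) = J1 at *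
  have e : As s * h ^ (-(2 * s)) * (X1 + X2) - As s * (h ^ (-(2 * s)) * (J2 + J1)) =
      As s * h ^ (-(2 * s)) * ((X1 - J1) + (X2 - J2)) := by ring
  rw [e, abs_mul, abs_of_pos hs']
  calc _ ≤ As s * h ^ (-(2 * s)) * (L * h ^ α * C0 + L * h ^ α * C0) := by
        gcongr
        exact (abs_add_le _ _).trans (add_le_add d1 d2)
    _ = _ := by ring
end

section
/- (Uniform comparison with the fractional Laplacian, C^{1,α} case.) Let 0<α≤1 and 0<s<1 with α<2s<1+α. Let U:ℝ→ℝ be bounded and differentiable, with U' bounded and [U']_{C^{0,α}} := sup_{x≠y}|U'(x)−U'(y)|/|x−y|^α < ∞. Then there is a constant C>0 depending only on s and α (independent of h and U) such that for every h>0, sup_{j∈ℤ} |(-Δ_h)^s(r_hU)_j − (-Δ)^sU(hj)| ≤ C·[U']_{C^{0,α}}·h^{α−2s+1}. -/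
open MeasureTheory

/-- The continuous fractional Laplacian in its symmetric (second-difference) form:
`(-Δ)^s U(x) = (A_s/2) ∫_ℝ (2U(x) - U(x+z) - U(x-z))/|z|^{1+2s} dz`. -/
noncomputable def cFracLapSym (s : ℝ) (U : ℝ → ℝ) (x : ℝ) : ℝ :=
  As s / 2 * ∫ z : ℝ, (2 * U x - U (x + z) - U (x - z)) / |z| ^ (1 + 2 * s)


-- Gamma(x+a) upper/lower bounds
theorem gam_up (x a : ℝ) (hx : 0 < x) (ha0 : 0 < a) (ha1 : a < 1) :
    Real.Gamma (x + a) ≤ x ^ a * Real.Gamma x := by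
  have h := Real.Gamma_mul_add_mul_le_rpow_Gamma_mul_rpow_Gamma (s := x) (t := x + 1)
    (a := 1 - a) (b := a) hx (by linarith) (by linarith) ha0 (by ring)
  have e : (1 - a) * x + a * (x + 1) = x + a := by ring
  have g := Real.Gamma_pos_of_pos hx
  rw [e, Real.Gamma_add_one hx.ne', Real.mul_rpow hx.le g.le] at h
  have : Real.Gamma x ^ (1 - a) * (x ^ a * Real.Gamma x ^ a) = x ^ a * Real.Gamma x := by
    have : Real.Gamma x ^ (1 - a) * Real.Gamma x ^ a = Real.Gamma x := by
      rw [← Real.rpow_add g]; simp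
    linear_combination x ^ a * this
  linarith

theorem gam_lo (x a : ℝ) (hx : 0 < x) (ha0 : 0 < a) (ha1 : a < 1) :
    x * Real.Gamma x ≤ (x + a) ^ (1 - a) * Real.Gamma (x + a) := by
  have h := gam_up (x + a) (1 - a) (by linarith) (by linarith) (by linarith)
  have e : x + a + (1 - a) = x + 1 := by ring
  rwa [e, Real.Gamma_add_one hx.ne'] at h

theorem bern (k p : ℝ) (hk : 1 ≤ k) (hp : 1 ≤ p) :
    k ^ (-p) * (1 - p / k) ≤ (k + 1) ^ (-p) := by
  have hk0 : 0 < k := by linarith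
  have h := one_add_mul_self_le_rpow_one_add (s := -(1 / (k + 1)))
    (by have : 1 / (k + 1) ≤ 1 := by rw [div_le_one (by linarith)]; linarith
        linarith) hp
  have e : 1 + -(1 / (k + 1)) = k / (k + 1) := by field_simp; ring
  rw [e, Real.div_rpow hk0.le (by linarith)] at h
  have h2 : 1 - p / k ≤ k ^ p / (k + 1) ^ p := by
    have : p / (k + 1) ≤ p / k := by gcongr; linarith
    refine le_trans ?_ h
    have : p * -(1 / (k + 1)) = - (p / (k + 1)) := by ring
    linarith
  rw [Real.rpow_neg hk0.le, Real.rpow_neg (by linarith)]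
  have : 0 < k ^ p := by positivity
  calc (k ^ p)⁻¹ * (1 - p / k) ≤ (k ^ p)⁻¹ * (k ^ p / (k + 1) ^ p) := by gcongr
    _ = _ := by field_simp

noncomputable def kap (s k : ℝ) : ℝ := Real.Gamma (k - s) / Real.Gamma (k + 1 + s)

theorem kap_lo (s k : ℝ) (hs0 : 0 < s) (hs1 : s < 1) (hk : 1 ≤ k) :
    (k + 1) ^ (-(1 + 2 * s)) ≤ kap s k := by
  have hk0 : 0 < k := by linarith
  have hks : 0 < k - s := by linarith
  have g := Real.Gamma_pos_of_pos hk0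
  have h1 := gam_lo k (1 - s) hk0 (by linarith) (by linarith)
  have h2 := gam_up (k + 1) s (by linarith) hs0 hs1
  have e : k + (1 - s) = (k - s) + 1 := by ring
  rw [e, Real.Gamma_add_one hks.ne'] at h1
  rw [Real.Gamma_add_one hk0.ne'] at h2
  have e2 : 1 - (1 - s) = s := by ring
  rw [e2] at h1
  have g1 := Real.Gamma_pos_of_pos hks
  have g2 : 0 < Real.Gamma (k + 1 + s) := Real.Gamma_pos_of_pos (by linarith)
  unfold kap
  rw [le_div_iff₀ g2]
  have h3 : (k - s + 1) ^ s ≤ (k + 1) ^ s := by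
    apply Real.rpow_le_rpow <;> linarith
  have hP : 0 < (k + 1) ^ s := by positivity
  have h4 : (k + 1) ^ (-(1 + 2 * s)) = ((k + 1) * ((k + 1) ^ s * (k + 1) ^ s))⁻¹ := by
    rw [Real.rpow_neg (by linarith), Real.rpow_add (by linarith), Real.rpow_one, two_mul,
      Real.rpow_add (by linarith)]
  rw [h4, inv_mul_le_iff₀ (by positivity)]
  calc Real.Gamma (k + 1 + s) ≤ (k + 1) ^ s * (k * Real.Gamma k) := h2
    _ ≤ (k + 1) ^ s * ((k - s + 1) ^ s * ((k - s) * Real.Gamma (k - s))) := by gcongr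
    _ ≤ (k + 1) ^ s * ((k + 1) ^ s * ((k + 1) * Real.Gamma (k - s))) := by
        gcongr; linarith
    _ = _ := by ring

theorem kap_up (s k : ℝ) (hs0 : 0 < s) (hs1 : s < 1) (hk : 1 ≤ k) :
    kap s k ≤ k ^ (-(1 + 2 * s)) * (1 + (2 + 3 * (s / (1 - s))) / k) := by
  have hk0 : 0 < k := by linarith
  have hks : 0 < k - s := by linarith
  have hs' : 0 < 1 - s := by linarith
  have g := Real.Gamma_pos_of_pos hk0
  have h1 := gam_up k (1 - s) hk0 (by linarith) (by linarith)
  have h2 := gam_lo (k + 1) s (by linarith) hs0 hs1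
  have e : k + (1 - s) = (k - s) + 1 := by ring
  rw [e, Real.Gamma_add_one hks.ne'] at h1
  rw [Real.Gamma_add_one hk0.ne'] at h2
  have g1 := Real.Gamma_pos_of_pos hks
  have g2 : 0 < Real.Gamma (k + 1 + s) := Real.Gamma_pos_of_pos (by linarith)
  have h3 : (k + 1 + s) ^ (1 - s) ≤ k ^ (1 - s) * (1 + 2 / k) := by
    have : (k + 1 + s) ^ (1 - s) ≤ (k * (1 + 2 / k)) ^ (1 - s) := by
      apply Real.rpow_le_rpow (by linarith) _ hs'.le
      have : k * (1 + 2 / k) = k + 2 := by field_simp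
      linarith
    refine this.trans ?_
    rw [Real.mul_rpow hk0.le (by positivity)]
    gcongr
    have : (1 : ℝ) ≤ 1 + 2 / k := by have : 0 < 2 / k := by positivity
                                     linarith
    calc _ ≤ (1 + 2 / k) ^ (1 : ℝ) := Real.rpow_le_rpow_of_exponent_le this (by linarith)
      _ = _ := Real.rpow_one _
  set c := s / (1 - s) with hc
  have hc0 : 0 < c := by positivity
  have h4 : k ≤ (k - s) * (1 + c / k) := by
    have : c * (1 - s) = s := by rw [hc]; field_simp
    have e : (k - s) * (1 + c / k) - k = c - s - s * c / k := by field_simp; ring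
    have : s * c / k ≤ s * c := div_le_self (by positivity) hk
    nlinarith
  set Q := k ^ (1 - s) with hQ
  have hQ0 : 0 < Q := by positivity
  have h5 : k ^ (-(1 + 2 * s)) = Q * Q / k ^ 3 := by
    rw [hQ, ← Real.rpow_add hk0, eq_div_iff (by positivity), ← Real.rpow_natCast,
      ← Real.rpow_add hk0]
    congr 1; push_cast; ring
  unfold kap
  rw [div_le_iff₀ g2, h5]
  have h6 : (1 + 2 / k) * (1 + c / k) ≤ 1 + (2 + 3 * c) / k := by
    have : 2 * c / (k * k) ≤ 2 * c / k := by
      gcongr; nlinarith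
    have e : (1 + 2 / k) * (1 + c / k) = 1 + 2 / k + c / k + 2 * c / (k * k) := by
      field_simp; ring
    rw [e]
    have : 1 + (2 + 3 * c) / k = 1 + 2 / k + c / k + 2 * c / k := by ring
    linarith
  have h7 : k ^ 2 * Real.Gamma k ≤ Q * (1 + 2 / k) * Real.Gamma (k + 1 + s) := by
    calc k ^ 2 * Real.Gamma k ≤ (k + 1) * (k * Real.Gamma k) := by
          rw [← mul_assoc]; gcongr; nlinarith
      _ ≤ _ := h2
      _ ≤ _ := by gcongr
  have h8 : k * Real.Gamma (k - s) ≤ Q * Real.Gamma k * (1 + c / k) := by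
    calc _ ≤ (k - s) * (1 + c / k) * Real.Gamma (k - s) := by gcongr
      _ = (k - s) * Real.Gamma (k - s) * (1 + c / k) := by ring
      _ ≤ _ := by gcongr
  have h9 : k ^ 3 * Real.Gamma (k - s) ≤ Q * Q * ((1 + 2 / k) * (1 + c / k)) * Real.Gamma (k + 1 + s) := by
    calc _ = k ^ 2 * (k * Real.Gamma (k - s)) := by ring
      _ ≤ k ^ 2 * (Q * Real.Gamma k * (1 + c / k)) := by gcongr
      _ = (k ^ 2 * Real.Gamma k) * (Q * (1 + c / k)) := by ring
      _ ≤ (Q * (1 + 2 / k) * Real.Gamma (k + 1 + s)) * (Q * (1 + c / k)) := by gcongr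
      _ = _ := by ring
  have : Real.Gamma (k - s) = k ^ 3 * Real.Gamma (k - s) / k ^ 3 := by field_simp
  rw [this, div_mul_eq_mul_div, div_mul_eq_mul_div]
  exact (div_le_div_iff_of_pos_right (by positivity)).2 (h9.trans (by gcongr))

theorem kap_diff (s : ℝ) (hs0 : 0 < s) (hs1 : s < 1) : ∃ C : ℝ, 0 < C ∧ ∀ k : ℝ, 1 ≤ k →
    |kap s k - k ^ (-(1 + 2 * s))| ≤ C * (k ^ (-(1 + 2 * s)) / k) := by
  have hs' : 0 < 1 - s := by linarith
  have hc : 0 < s / (1 - s) := by positivity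
  refine ⟨3 + 2 * s + 3 * (s / (1 - s)), by positivity, fun k hk => ?_⟩
  have hk0 : 0 < k := by linarith
  have h1 := kap_lo s k hs0 hs1 hk
  have h2 := kap_up s k hs0 hs1 hk
  have h3 := bern k (1 + 2 * s) hk (by linarith)
  have hT : 0 < k ^ (-(1 + 2 * s)) / k := by positivity
  have e1 : k ^ (-(1 + 2 * s)) * (1 - (1 + 2 * s) / k) = k ^ (-(1 + 2 * s)) - (1 + 2 * s) * (k ^ (-(1 + 2 * s)) / k) := by ring
  have e2 : k ^ (-(1 + 2 * s)) * (1 + (2 + 3 * (s / (1 - s))) / k) = k ^ (-(1 + 2 * s)) + (2 + 3 * (s / (1 - s))) * (k ^ (-(1 + 2 * s)) / k) := by ring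
  rw [e1] at h3
  rw [e2] at h2
  rw [abs_le]
  constructor <;> nlinarith

theorem kap_summable (s : ℝ) (hs0 : 0 < s) (hs1 : s < 1) (g : ℕ → ℝ) (M : ℝ)
    (hg : ∀ n, |g n| ≤ M) : Summable (fun n : ℕ => g n * kap s (n + 1)) := by
  obtain ⟨C, hC, h⟩ := kap_diff s hs0 hs1
  have hM : 0 ≤ M := (abs_nonneg _).trans (hg 0)
  have hS : Summable (fun n : ℕ => ((n : ℝ) + 1) ^ (-(1 + 2 * s))) := by
    have := (summable_nat_add_iff 1).2 (Real.summable_nat_rpow.2 (show -(1 + 2 * s) < -1 by linarith))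
    simpa using this
  refine Summable.of_norm_bounded (g := fun n : ℕ => M * (1 + C) * ((n : ℝ) + 1) ^ (-(1 + 2 * s))) (hS.mul_left _) fun n => ?_
  have hk : (1 : ℝ) ≤ n + 1 := by have := n.cast_nonneg (α := ℝ); linarith
  have h1 := h (n + 1) hk
  have h2 : ((n : ℝ) + 1) ^ (-(1 + 2 * s)) / (n + 1) ≤ ((n : ℝ) + 1) ^ (-(1 + 2 * s)) :=
    div_le_self (by positivity) hk
  rw [Real.norm_eq_abs, abs_mul, mul_assoc]
  refine mul_le_mul (hg n) ?_ (abs_nonneg _) hM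
  have h0 : 0 < ((n : ℝ) + 1) ^ (-(1 + 2 * s)) := by positivity
  rw [abs_le] at h1 ⊢
  constructor <;> nlinarith

theorem term_bound (α s C0 : ℝ) (hα0 : 0 < α) (hα1 : α ≤ 1)
    (hs0 : 0 < s)
    (hk0 : ∀ k : ℝ, 1 ≤ k →
    |kap s k - k ^ (-(1 + 2 * s))| ≤ C0 * (k ^ (-(1 + 2 * s)) / k))
    (G : ℝ → ℝ) (B : ℝ) (hB : 0 ≤ B)
    (hG1 : ∀ t, 0 < t → |G t| ≤ B * t ^ (1 + α))
    (hG2 : ∀ a b, 0 < a → a ≤ b → |G b - G a| ≤ B * b ^ α * (b - a))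
    (k t : ℝ) (hk : 1 ≤ k) (ht : k < t) (ht' : t ≤ k + 1) :
    |G k * kap s k - G t / t ^ (1 + 2 * s)| ≤
      (C0 + 2 + 4 * (1 + 2 * s)) * B * k ^ (α - 2 * s - 1) := by
  have k0 : 0 < k := by linarith
  have t0 : 0 < t := by linarith
  have e1 : G t / t ^ (1 + 2 * s) = G t * t ^ (-(1 + 2 * s)) := by
    rw [Real.rpow_neg t0.le]; rfl
  set p := 1 + 2 * s with hp
  have hT : k ^ (-p) * k ^ α = k ^ (α - 2 * s - 1) := by
    rw [← Real.rpow_add k0]; congr 1; rw [hp]; ring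
  have hT1 : k ^ (1 + α) = k * k ^ α := by rw [Real.rpow_add k0, Real.rpow_one]
  have q0 : 0 < k ^ (-p) := by positivity
  have a0 : 0 < k ^ α := by positivity
  have ht2 : t ≤ 2 * k := by linarith
  have hta : t ^ α ≤ 2 * k ^ α := by
    calc t ^ α ≤ (2 * k) ^ α := Real.rpow_le_rpow t0.le ht2 hα0.le
      _ = 2 ^ α * k ^ α := Real.mul_rpow (by norm_num) k0.le
      _ ≤ 2 ^ (1 : ℝ) * k ^ α := by gcongr; norm_num
      _ = _ := by rw [Real.rpow_one]
  have A1 : |G k * (kap s k - k ^ (-p))| ≤ C0 * (B * (k ^ (-p) * k ^ α)) := by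
    rw [abs_mul]
    calc _ ≤ (B * k ^ (1 + α)) * (C0 * (k ^ (-p) / k)) :=
          mul_le_mul (hG1 k k0) (hk0 k hk) (abs_nonneg _) (by positivity)
      _ = _ := by rw [hT1]; field_simp
  have A2 : |(G t - G k) * k ^ (-p)| ≤ 2 * (B * (k ^ (-p) * k ^ α)) := by
    rw [abs_mul, abs_of_pos q0]
    have h1 := hG2 k t k0 ht.le
    have h2 : B * t ^ α * (t - k) ≤ B * (2 * k ^ α) * 1 := by
      gcongr; linarith
    calc _ ≤ (B * (2 * k ^ α) * 1) * k ^ (-p) := by gcongr; exact h1.trans h2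
      _ = _ := by ring
  have A3 : |G t * (k ^ (-p) - t ^ (-p))| ≤ 4 * p * (B * (k ^ (-p) * k ^ α)) := by
    rw [abs_mul]
    have h1 := hG1 t t0
    have h2 : t ^ (1 + α) ≤ 4 * (k * k ^ α) := by
      rw [Real.rpow_add t0, Real.rpow_one]
      calc t * t ^ α ≤ (2 * k) * (2 * k ^ α) := by gcongr
        _ = _ := by ring
    have h3 := bern k p hk (by linarith)
    have h4 : (k + 1) ^ (-p) ≤ t ^ (-p) :=
      Real.rpow_le_rpow_of_nonpos t0 ht' (by linarith)
    have h5 : t ^ (-p) ≤ k ^ (-p) := Real.rpow_le_rpow_of_nonpos k0 ht.le (by linarith)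
    have h6 : |k ^ (-p) - t ^ (-p)| ≤ k ^ (-p) * (p / k) := by
      rw [abs_of_nonneg (by linarith)]
      linarith
    calc _ ≤ (B * (4 * (k * k ^ α))) * (k ^ (-p) * (p / k)) := by
          refine mul_le_mul (h1.trans (by gcongr)) h6 (abs_nonneg _) (by positivity)
      _ = _ := by field_simp
  have e : G k * kap s k - G t / t ^ p = G k * (kap s k - k ^ (-p)) - (G t - G k) * k ^ (-p)
      + G t * (k ^ (-p) - t ^ (-p)) := by rw [e1]; ring
  rw [e, ← hT]
  have B1 := abs_add_le (G k * (kap s k - k ^ (-p)) - (G t - G k) * k ^ (-p)) (G t * (k ^ (-p) - t ^ (-p)))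
  have B2 := abs_sub (G k * (kap s k - k ^ (-p))) ((G t - G k) * k ^ (-p))
  linarith

theorem iUnion_Ioc_one : (⋃ n : ℕ, Set.Ioc ((n : ℝ) + 1) (n + 1 + 1)) = Set.Ioi 1 := by
  ext x
  simp only [Set.mem_iUnion, Set.mem_Ioc, Set.mem_Ioi]
  constructor
  · rintro ⟨n, h1, h2⟩
    have := n.cast_nonneg (α := ℝ); linarith
  · intro hx
    have h0 : 0 < ⌈x⌉₊ - 1 := by
      have : 1 < ⌈x⌉₊ := Nat.lt_ceil.2 (by simpa using hx)
      omega
    obtain ⟨n, hn⟩ : ∃ n, ⌈x⌉₊ = n + 2 := ⟨⌈x⌉₊ - 2, by omega⟩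
    have h1 := Nat.le_ceil x
    have h2 := Nat.ceil_lt_add_one (show 0 ≤ x by linarith)
    rw [hn] at h1 h2
    push_cast at h1 h2
    exact ⟨n, by linarith, by linarith⟩

theorem core (α s : ℝ) (hα0 : 0 < α) (hα1 : α ≤ 1)
    (hs0 : 0 < s) (hs1 : s < 1) (hl : α < 2 * s) (hr : 2 * s < 1 + α) :
    ∃ C : ℝ, 0 < C ∧ ∀ (G : ℝ → ℝ) (B M : ℝ), 0 ≤ B → Continuous G → (∀ t, |G t| ≤ M) →
    (∀ t, 0 < t → |G t| ≤ B * t ^ (1 + α)) →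
    (∀ a b, 0 < a → a ≤ b → |G b - G a| ≤ B * b ^ α * (b - a)) →
    |∑' n : ℕ, G (n + 1) * kap s (n + 1) - ∫ t in Set.Ioi (0 : ℝ), G t / t ^ (1 + 2 * s)| ≤ C * B := by
  obtain ⟨C0, hC0, hk0⟩ := kap_diff s hs0 hs1
  have hS : Summable (fun n : ℕ => ((n : ℝ) + 1) ^ (α - 2 * s - 1)) := by
    have := (summable_nat_add_iff 1).2 (Real.summable_nat_rpow.2 (show α - 2 * s - 1 < -1 by linarith))
    simpa using this
  set S := ∑' n : ℕ, ((n : ℝ) + 1) ^ (α - 2 * s - 1)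
  have hS0 : 0 ≤ S := tsum_nonneg fun n => by positivity
  set J := ∫ t in Set.Ioc (0 : ℝ) 1, t ^ (α - 2 * s)
  have hJi : IntegrableOn (fun t : ℝ => t ^ (α - 2 * s)) (Set.Ioc 0 1) :=
    (intervalIntegrable_iff_integrableOn_Ioc_of_le zero_le_one).1
      (intervalIntegral.intervalIntegrable_rpow' (by linarith))
  have hJ0 : 0 ≤ J := setIntegral_nonneg measurableSet_Ioc fun t ht => by
    have := ht.1; positivity
  refine ⟨(C0 + 2 + 4 * (1 + 2 * s)) * S + J + 1, by positivity, ?_⟩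
  intro G B M hB hGc hGM hG1 hG2
  have hM : 0 ≤ M := (abs_nonneg _).trans (hGM 0)
  set F : ℝ → ℝ := fun t => G t / t ^ (1 + 2 * s) with hF
  have hFm : Measurable F := hGc.measurable.div (measurable_id.pow_const _)
  have hFb : ∀ t ∈ Set.Ioc (0 : ℝ) 1, ‖F t‖ ≤ B * t ^ (α - 2 * s) := fun t ht => by
    have t0 := ht.1
    have : 0 < t ^ (1 + 2 * s) := by positivity
    rw [hF, Real.norm_eq_abs, abs_div, abs_of_pos this, div_le_iff₀ this, mul_assoc, ← Real.rpow_add t0]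
    have ee : α - 2 * s + (1 + 2 * s) = 1 + α := by ring
    rw [ee]
    exact hG1 t t0
  have hF1 : IntegrableOn F (Set.Ioc 0 1) := by
    refine Integrable.mono' (hJi.const_mul B) hFm.aestronglyMeasurable ?_
    exact (ae_restrict_iff' measurableSet_Ioc).2 (Filter.Eventually.of_forall hFb)
  have hF2 : IntegrableOn F (Set.Ioi 1) := by
    refine Integrable.mono' ((integrableOn_Ioi_rpow_of_lt (show -(1 + 2 * s) < -1 by linarith) one_pos).const_mul M) hFm.aestronglyMeasurable ?_
    refine (ae_restrict_iff' measurableSet_Ioi).2 (Filter.Eventually.of_forall fun t ht => ?_)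
    have t0 : 0 < t := one_pos.trans ht
    have : 0 < t ^ (1 + 2 * s) := by positivity
    rw [hF, Real.norm_eq_abs, abs_div, abs_of_pos this, Real.rpow_neg t0.le, ← div_eq_mul_inv]
    gcongr
    exact hGM t
  have hsplit : ∫ t in Set.Ioi (0 : ℝ), F t = (∫ t in Set.Ioc (0 : ℝ) 1, F t) + ∫ t in Set.Ioi (1 : ℝ), F t := by
    rw [← Set.Ioc_union_Ioi_eq_Ioi (zero_le_one (α := ℝ)),
      setIntegral_union (Set.Ioc_disjoint_Ioi le_rfl) measurableSet_Ioi hF1 hF2]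
  have hfirst : |∫ t in Set.Ioc (0 : ℝ) 1, F t| ≤ B * J := by
    rw [← integral_const_mul, ← Real.norm_eq_abs]
    refine norm_integral_le_of_norm_le (hJi.const_mul B) ?_
    exact (ae_restrict_iff' measurableSet_Ioc).2 (Filter.Eventually.of_forall hFb)
  have hsum : HasSum (fun n : ℕ => ∫ t in Set.Ioc ((n : ℝ) + 1) (n + 1 + 1), F t)
      (∫ t in Set.Ioi (1 : ℝ), F t) := by
    rw [← iUnion_Ioc_one] at hF2 ⊢
    refine hasSum_integral_iUnion (fun _ => measurableSet_Ioc) ?_ hF2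
    intro i j hij
    rw [Function.onFun, Set.disjoint_left]
    rintro x ⟨h1, h2⟩ ⟨h3, h4⟩
    apply hij
    have a1 : (i : ℝ) < j + 1 := by linarith
    have a2 : (j : ℝ) < i + 1 := by linarith
    norm_cast at a1 a2
    omega
  have hsumG := (kap_summable s hs0 hs1 (fun n => G (n + 1)) M (fun n => hGM _)).hasSum
  have hd := hsumG.sub hsum
  have hbound := hd.norm_le_of_bounded (hS.hasSum.mul_left ((C0 + 2 + 4 * (1 + 2 * s)) * B)) (fun n => by
    have hv : volume.real (Set.Ioc ((n : ℝ) + 1) (n + 1 + 1)) = 1 := by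
      rw [Real.volume_real_Ioc_of_le (by linarith)]; ring
    have hn1 : (1 : ℝ) ≤ n + 1 := by have := n.cast_nonneg (α := ℝ); linarith
    have e : G (n + 1) * kap s (n + 1) = ∫ t in Set.Ioc ((n : ℝ) + 1) (n + 1 + 1), G (n + 1) * kap s (n + 1) := by
      rw [setIntegral_const, hv, one_smul]
    have hFn : IntegrableOn F (Set.Ioc ((n : ℝ) + 1) (n + 1 + 1)) :=
      hF2.mono_set (fun x hx => lt_of_le_of_lt hn1 hx.1)
    have hcn : IntegrableOn (fun _ : ℝ => G (n + 1) * kap s (n + 1)) (Set.Ioc ((n : ℝ) + 1) (n + 1 + 1)) :=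
      integrableOn_const (by simp)
    rw [e, ← integral_sub hcn hFn]
    refine (norm_setIntegral_le_of_norm_le_const (C := (C0 + 2 + 4 * (1 + 2 * s)) * B * ((n : ℝ) + 1) ^ (α - 2 * s - 1)) (by simp) ?_).trans ?_
    · intro t ht
      exact term_bound α s C0 hα0 hα1 hs0 hk0 G B hB hG1 hG2 _ t hn1 ht.1 ht.2
    · rw [hv, mul_one])
  rw [Real.norm_eq_abs] at hbound
  rw [hsplit]
  rw [abs_le] at *
  constructor <;> nlinarith

theorem Ksh_pos (h s : ℝ) (hh : 0 < h) (n : ℕ) :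
    Ksh h s ((n : ℤ) + 1) = As s * h ^ (-(2 * s)) * kap s (n + 1) := by
  have h1 : (n : ℤ) + 1 ≠ 0 := by omega
  have h2 : |(((n : ℤ) + 1 : ℤ) : ℝ)| = n + 1 := by
    push_cast; exact abs_of_pos (by positivity)
  rw [Ksh, if_neg h1, h2, Real.rpow_neg hh.le, kap, div_mul_eq_div_div_swap, div_eq_mul_inv (_ / _)]
  ring

theorem Ksh_neg (h s : ℝ) (m : ℤ) : Ksh h s (-m) = Ksh h s m := by
  simp [Ksh]

theorem fracLap_eq (h s : ℝ) (hh : 0 < h) (hs0 : 0 < s) (hs1 : s < 1) (U : ℝ → ℝ) (M : ℝ)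
    (hM : ∀ x, |U x| ≤ M) (j : ℤ) :
    fracLap h s (fun m : ℤ => U (h * m)) j = As s * h ^ (-(2 * s)) *
      ∑' n : ℕ, (2 * U (h * j) - U (h * j + h * (n + 1)) - U (h * j - h * (n + 1))) * kap s (n + 1) := by
  unfold fracLap
  rw [← (Equiv.subLeft j).tsum_eq]
  simp only [Equiv.subLeft_apply, sub_sub_cancel]
  set f : ℤ → ℝ := fun n => (U (h * j) - U (h * ((j - n : ℤ) : ℝ))) * Ksh h s n with hf
  have f0 : f 0 = 0 := by simp [hf]
  have f1 : ∀ n : ℕ, f (n + 1) = As s * h ^ (-(2 * s)) * ((U (h * j) - U (h * j - h * (n + 1))) * kap s (n + 1)) := by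
    intro n
    simp only [hf]
    rw [Ksh_pos h s hh]
    have : h * ((j - ((n : ℤ) + 1) : ℤ) : ℝ) = h * j - h * (n + 1) := by push_cast; ring
    rw [this]; ring
  have f2 : ∀ n : ℕ, f (-(n + 1)) = As s * h ^ (-(2 * s)) * ((U (h * j) - U (h * j + h * (n + 1))) * kap s (n + 1)) := by
    intro n
    simp only [hf]
    rw [Ksh_neg, Ksh_pos h s hh]
    have : h * ((j - -((n : ℤ) + 1) : ℤ) : ℝ) = h * j + h * (n + 1) := by push_cast; ring
    rw [this]; ring
  have hb : ∀ x y, |U x - U y| ≤ 2 * M := fun x y => by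
    have := abs_sub (U x) (U y)
    linarith [hM x, hM y]
  have s1 := kap_summable s hs0 hs1 (fun n => U (h * j) - U (h * j - h * (n + 1))) (2 * M) (fun n => hb _ _)
  have s2 := kap_summable s hs0 hs1 (fun n => U (h * j) - U (h * j + h * (n + 1))) (2 * M) (fun n => hb _ _)
  have := tsum_of_add_one_of_neg_add_one (f := f) (by simp only [f1]; exact s1.mul_left _)
    (by simp only [f2]; exact s2.mul_left _)
  rw [this, f0]
  simp only [f1, f2]
  rw [tsum_mul_left, tsum_mul_left, add_zero, ← mul_add, ← s1.tsum_add s2]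
  congr 1
  refine tsum_congr fun n => ?_
  ring

theorem cFracLap_eq (h s : ℝ) (hh : 0 < h) (U : ℝ → ℝ) (x : ℝ) :
    cFracLapSym s U x = As s * h ^ (-(2 * s)) *
      ∫ t in Set.Ioi (0 : ℝ), (2 * U x - U (x + h * t) - U (x - h * t)) / t ^ (1 + 2 * s) := by
  unfold cFracLapSym
  set f : ℝ → ℝ := fun z => (2 * U x - U (x + z) - U (x - z)) / z ^ (1 + 2 * s) with hf
  have e1 : ∀ z : ℝ, (2 * U x - U (x + z) - U (x - z)) / |z| ^ (1 + 2 * s) = f |z| := by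
    intro z
    simp only [hf]
    rcases abs_cases z with ⟨h1, _⟩ | ⟨h1, _⟩
    · rw [h1]
    · rw [h1, sub_neg_eq_add, ← sub_eq_add_neg]; ring
  simp_rw [e1]
  rw [integral_comp_abs]
  have e2 := integral_comp_mul_left_Ioi' f 0 hh
  rw [mul_zero] at e2
  rw [← e2]
  have e3 : ∫ t in Set.Ioi (0 : ℝ), f (h * t) = h ^ (-(1 + 2 * s)) *
      ∫ t in Set.Ioi (0 : ℝ), (2 * U x - U (x + h * t) - U (x - h * t)) / t ^ (1 + 2 * s) := by
    rw [← integral_const_mul]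
    refine setIntegral_congr_fun measurableSet_Ioi fun t ht => ?_
    have t0 : (0 : ℝ) < t := ht
    simp only [hf]
    rw [Real.mul_rpow hh.le t0.le, Real.rpow_neg hh.le, div_mul_eq_div_div_swap, div_eq_mul_inv (_ / _)]
    ring
  have e4 : h ^ (-(2 * s)) = h * h ^ (-(1 + 2 * s)) := by
    have : -(2 * s) = 1 + -(1 + 2 * s) := by ring
    rw [this, Real.rpow_add hh, Real.rpow_one]
  rw [e3, e4, smul_eq_mul]
  ring

theorem G_lip (α : ℝ) (hα0 : 0 < α) (hα1 : α ≤ 1) (h : ℝ) (hh : 0 < h) (U U' : ℝ → ℝ) (L : ℝ) (hL : 0 ≤ L)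
    (hU : ∀ x : ℝ, HasDerivAt U (U' x) x)
    (hU' : ∀ x y : ℝ, |U' x - U' y| ≤ L * |x - y| ^ α) (x a b : ℝ) (ha : 0 ≤ a) (hab : a ≤ b) :
    |(2 * U x - U (x + h * b) - U (x - h * b)) - (2 * U x - U (x + h * a) - U (x - h * a))| ≤
      (2 * L * h ^ (1 + α)) * b ^ α * (b - a) := by
  set G : ℝ → ℝ := fun t => 2 * U x - U (x + h * t) - U (x - h * t) with hG
  have hd : ∀ t ∈ Set.Icc a b, HasDerivWithinAt G (h * (U' (x - h * t) - U' (x + h * t))) (Set.Icc a b) t := by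
    intro t _
    have l : HasDerivAt (fun t : ℝ => h * t) h t := by simpa using (hasDerivAt_id t).const_mul h
    have d1 := (hU (x + h * t)).comp t (l.const_add x)
    have d2 := (hU (x - h * t)).comp t (l.const_sub x)
    have d3 := ((d1.const_sub (2 * U x)).sub d2).hasDerivWithinAt (s := Set.Icc a b)
    refine d3.congr_deriv ?_
    ring
  have hb : ∀ t ∈ Set.Icc a b, ‖h * (U' (x - h * t) - U' (x + h * t))‖ ≤ (2 * L * h ^ (1 + α)) * b ^ α := by
    intro t ht
    have t0 : 0 ≤ t := ha.trans ht.1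
    rw [Real.norm_eq_abs, abs_mul, abs_of_pos hh]
    have h1 := hU' (x - h * t) (x + h * t)
    have h2 : |x - h * t - (x + h * t)| = 2 * h * t := by
      have : x - h * t - (x + h * t) = - (2 * h * t) := by ring
      rw [this, abs_neg, abs_of_nonneg (by positivity)]
    have h3 : (2 * h * t) ^ α ≤ 2 * h ^ α * b ^ α := by
      rw [Real.mul_rpow (by positivity) t0, Real.mul_rpow (by positivity) hh.le]
      have : (2 : ℝ) ^ α ≤ 2 := by
        calc (2 : ℝ) ^ α ≤ 2 ^ (1 : ℝ) := Real.rpow_le_rpow_of_exponent_le (by norm_num) hα1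
          _ = 2 := Real.rpow_one _
      gcongr
      exact ht.2
    rw [h2] at h1
    calc _ ≤ h * (L * (2 * h ^ α * b ^ α)) := by gcongr; exact h1.trans (by gcongr)
      _ = _ := by rw [Real.rpow_add hh, Real.rpow_one]; ring
  have := (convex_Icc a b).norm_image_sub_le_of_norm_hasDerivWithin_le hd hb
    (Set.left_mem_Icc.2 hab) (Set.right_mem_Icc.2 hab)
  rwa [Real.norm_eq_abs, Real.norm_eq_abs, abs_of_nonneg (sub_nonneg.2 hab)] at this

/-- Uniform comparison of the fractional discrete Laplacian with the fractional Laplacian,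
for bounded `C^{1,α}` functions with `α < 2s < 1 + α`. -/
theorem uniform_comparison_C1alpha (α s : ℝ) (hα0 : 0 < α) (hα1 : α ≤ 1)
    (hs0 : 0 < s) (hs1 : s < 1) (hl : α < 2 * s) (hr : 2 * s < 1 + α) :
    ∃ C : ℝ, 0 < C ∧ ∀ h : ℝ, 0 < h → ∀ U U' : ℝ → ℝ, ∀ M M' L : ℝ, 0 ≤ L →
      (∀ x : ℝ, |U x| ≤ M) →
      (∀ x : ℝ, HasDerivAt U (U' x) x) →
      (∀ x : ℝ, |U' x| ≤ M') →
      (∀ x y : ℝ, |U' x - U' y| ≤ L * |x - y| ^ α) →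
      ∀ j : ℤ,
        |fracLap h s (fun m : ℤ => U (h * m)) j - cFracLapSym s U (h * j)| ≤
          C * L * h ^ (α - 2 * s + 1) := by
  obtain ⟨C, hC, hcore⟩ := core α s hα0 hα1 hs0 hs1 hl hr
  refine ⟨2 * |As s| * C + 1, by positivity, ?_⟩
  intro h hh U U' M M' L hL hM hU _ hU' j
  set x := h * (j : ℝ) with hx
  set G : ℝ → ℝ := fun t => 2 * U x - U (x + h * t) - U (x - h * t) with hG
  have hUc : Continuous U := continuous_iff_continuousAt.2 fun x => (hU x).continuousAt
  have hlip : ∀ a b, 0 ≤ a → a ≤ b → |G b - G a| ≤ (2 * L * h ^ (1 + α)) * b ^ α * (b - a) :=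
    fun a b ha hab => G_lip α hα0 hα1 h hh U U' L hL hU hU' x a b ha hab
  have key := hcore G (2 * L * h ^ (1 + α)) (4 * M) (by positivity) (by fun_prop) ?_ ?_
    (fun a b ha hab => hlip a b ha.le hab)
  · rw [fracLap_eq h s hh hs0 hs1 U M hM j, cFracLap_eq h s hh U x, ← mul_sub, abs_mul, abs_mul,
      abs_of_pos (show 0 < h ^ (-(2 * s)) by positivity)]
    have e : h ^ (α - 2 * s + 1) = h ^ (-(2 * s)) * h ^ (1 + α) := by
      rw [← Real.rpow_add hh]; congr 1; ring
    rw [e]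
    have hp : 0 ≤ L * (h ^ (-(2 * s)) * h ^ (1 + α)) := by positivity
    calc _ ≤ |As s| * h ^ (-(2 * s)) * (C * (2 * L * h ^ (1 + α))) := by gcongr
      _ = 2 * |As s| * C * (L * (h ^ (-(2 * s)) * h ^ (1 + α))) := by ring
      _ ≤ _ := by linarith
  · intro t
    have h1 := abs_le.1 (hM x)
    have h2 := abs_le.1 (hM (x + h * t))
    have h3 := abs_le.1 (hM (x - h * t))
    simp only [hG]
    rw [abs_le]
    constructor <;> linarith
  · intro t ht
    have h1 := hlip 0 t le_rfl ht.le
    have : G 0 = 0 := by simp only [hG, mul_zero, add_zero, sub_zero]; ring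
    rw [this, sub_zero, sub_zero] at h1
    rw [Real.rpow_add ht, Real.rpow_one]
    convert h1 using 1
    ring
end
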